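/- Let G = GL_2(𝔽_q), T the diagonal torus, B the upper-triangular Borel, and λ₁ ≠ λ₂ characters of 𝔽_q^×. For characters μ₁, μ₂ of 𝔽_q^×, the multiplicity of the character μ₁ ⊗ μ₂ of T ≅ 𝔽_q^× × 𝔽_q^× in the restriction to T of the induced representation Ind_B^G(λ₁ ⊗ λ₂) is: 0 if μ₁μ₂ ≠ λ₁λ₂; 2 if (μ₁, μ₂) = (λ₁, λ₂) or (μ₁, μ₂) = (λ₂, λ₁); and 1 if μ₁μ₂ = λ₁λ₂ but {μ₁, μ₂} ≠ {λ₁, λ₂}. -/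

import Mathlib

open scoped Classical

/-- Extension of a character of `Fˣ` to `F`, by zero. -/
noncomputable def extChar {F : Type*} [Field F] (l : Fˣ →* ℂˣ) : F → ℂ :=
  fun x => if h : x = 0 then 0 else (l (Units.mk0 x h) : ℂ)

/-- The value of the character `λ` of the Borel `B` at an upper-triangular matrix. -/
noncomputable def borelCharVal {F : Type*} [Field F] (l₁ l₂ : Fˣ →* ℂˣ)
    (b : GL (Fin 2) F) : ℂ :=
  extChar l₁ ((b : Matrix (Fin 2) (Fin 2) F) 0 0) *
    extChar l₂ ((b : Matrix (Fin 2) (Fin 2) F) 1 1)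

/-- The character of `Ind_B^G λ`, computed by the standard induced-character formula
`χ(g) = (1/|B|) ∑_{s ∈ G, s⁻¹ g s ∈ B} λ(s⁻¹ g s)`. -/
noncomputable def inducedChar {F : Type*} [Field F] [Fintype F]
    (l₁ l₂ : Fˣ →* ℂˣ) (g : GL (Fin 2) F) : ℂ :=
  (1 / (Fintype.card {b : GL (Fin 2) F //
      (b : Matrix (Fin 2) (Fin 2) F) 1 0 = 0} : ℂ)) *
    ∑ s : GL (Fin 2) F,
      if ((s⁻¹ * g * s : GL (Fin 2) F) : Matrix (Fin 2) (Fin 2) F) 1 0 = 0 then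
        borelCharVal l₁ l₂ (s⁻¹ * g * s)
      else 0

/-- The diagonal matrix `diag(x, y)` as an element of `GL₂(F)`. -/
noncomputable def diagGL {F : Type*} [Field F] (x y : Fˣ) : GL (Fin 2) F :=
  Matrix.GeneralLinearGroup.mkOfDetNeZero (Matrix.diagonal ![(x : F), (y : F)])
    (by simp [Matrix.det_diagonal, Fin.prod_univ_two])

/-- The multiplicity of the character `μ₁ ⊗ μ₂` of the diagonal torus `T ≅ Fˣ × Fˣ`
in the restriction to `T` of the principal series `Ind_B^G (λ₁ ⊗ λ₂)`, computed as the
inner product `(1/|T|) ∑_{t ∈ T} χ(t) conj(μ₁(t₁) μ₂(t₂))`. -/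
noncomputable def torusMultiplicity {F : Type*} [Field F] [Fintype F]
    (l₁ l₂ μ₁ μ₂ : Fˣ →* ℂˣ) : ℂ :=
  (1 / ((Fintype.card Fˣ : ℂ) ^ 2)) *
    ∑ x : Fˣ, ∑ y : Fˣ,
      inducedChar l₁ l₂ (diagGL x y) *
        (starRingEnd ℂ) ((μ₁ x : ℂ) * (μ₂ y : ℂ))

/-!
`G` acts transitively on `ℙ¹(F)` and `B` is the stabilizer of `∞`, so the induced character at `g`
is a sum over the fixed points of `g` on `ℙ¹(F)`. The element `diag(x, y)` fixes `∞` and `0`, which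
contribute `l₁ x * l₂ y` and `l₁ y * l₂ x`; it fixes one of the remaining `q - 1` points only if it
is scalar, and then each contributes `l₁ x * l₂ x`. By orthogonality of characters these three
terms pair with `μ₁ ⊗ μ₂` to give `1` exactly when `(l₁, l₂) = (μ₁, μ₂)`, `(l₂, l₁) = (μ₁, μ₂)` and
`l₁ * l₂ = μ₁ * μ₂` respectively (in the last, the factor `q - 1` is the index of the centre in
`T`), and `0` otherwise.
-/

section FiniteGroup

variable {G : Type*} [Group G]

lemma conj_coe_char_apply [Finite G] (χ : G →* ℂˣ) (g : G) :
    (starRingEnd ℂ) (χ g : ℂ) = (χ g : ℂ)⁻¹ :=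
  (Complex.inv_eq_conj
    (((Units.coeHom ℂ).comp χ).isOfFinOrder (isOfFinOrder_of_finite g)).norm_eq_one).symm

lemma sum_char_mul_conj_char [Fintype G] (χ ψ : G →* ℂˣ) :
    ∑ g, (χ g : ℂ) * (starRingEnd ℂ) (ψ g : ℂ) = if χ = ψ then (Fintype.card G : ℂ) else 0 := by
  have coe_comp_div_eq_one_iff : (Units.coeHom ℂ).comp (χ / ψ) = 1 ↔ χ = ψ := by
    rw [← div_eq_one (a := χ), ← MonoidHom.cancel_left (g := Units.coeHom ℂ) Units.val_injective,
      MonoidHom.comp_one]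
  calc ∑ g, (χ g : ℂ) * (starRingEnd ℂ) (ψ g : ℂ)
      = ∑ g, (Units.coeHom ℂ).comp (χ / ψ) g := by
        simp [conj_coe_char_apply, div_eq_mul_inv]
    _ = if χ = ψ then (Fintype.card G : ℂ) else 0 := by
        rw [sum_hom_units]
        simp only [coe_comp_div_eq_one_iff, Nat.cast_ite, Nat.cast_zero]

lemma sum_sum_char_mul_conj_char [Fintype G] {H : Type*} [Group H] [Fintype H]
    (χ₁ ψ₁ : G →* ℂˣ) (χ₂ ψ₂ : H →* ℂˣ) :
    ∑ g, ∑ h, ((χ₁ g : ℂ) * χ₂ h) * (starRingEnd ℂ) ((ψ₁ g : ℂ) * ψ₂ h) =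
      if χ₁ = ψ₁ ∧ χ₂ = ψ₂ then (Fintype.card G * Fintype.card H : ℂ) else 0 := by
  calc ∑ g, ∑ h, ((χ₁ g : ℂ) * χ₂ h) * (starRingEnd ℂ) ((ψ₁ g : ℂ) * ψ₂ h)
      = (∑ g, (χ₁ g : ℂ) * (starRingEnd ℂ) (ψ₁ g : ℂ)) *
          ∑ h, (χ₂ h : ℂ) * (starRingEnd ℂ) (ψ₂ h : ℂ) := by
        simp only [Finset.sum_mul_sum, map_mul, mul_mul_mul_comm]
    _ = if χ₁ = ψ₁ ∧ χ₂ = ψ₂ then (Fintype.card G * Fintype.card H : ℂ) else 0 := by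
        rw [sum_char_mul_conj_char, sum_char_mul_conj_char, ite_zero_mul_ite_zero]

lemma sum_comp_smul_eq_card_stabilizer_nsmul_sum [Fintype G] {X M : Type*} [MulAction G X]
    [Fintype X] [MulAction.IsPretransitive G X] [AddCommMonoid M] (f : X → M) (x₀ : X) :
    ∑ g : G, f (g • x₀) = Fintype.card (MulAction.stabilizer G x₀) • ∑ x, f x := by
  have card_fiber (x : X) :
      Fintype.card {g : G // g • x₀ = x} = Fintype.card (MulAction.stabilizer G x₀) := by
    obtain ⟨h, rfl⟩ := MulAction.exists_smul_eq G x₀ x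
    refine Fintype.card_congr ((Equiv.mulLeft h⁻¹).subtypeEquiv fun g => ?_)
    rw [Equiv.coe_mulLeft, MulAction.mem_stabilizer_iff, mul_smul, inv_smul_eq_iff]
  rw [← Finset.sum_fiberwise' Finset.univ (fun g : G => g • x₀), Finset.smul_sum]
  refine Finset.sum_congr rfl fun x _ => ?_
  rw [Finset.sum_const, ← Fintype.card_subtype, card_fiber]

end FiniteGroup

lemma sum_ite_eq_zero {G₀ M : Type*} [GroupWithZero G₀] [Fintype G₀] [AddCommMonoid M] (a b : M) :
    ∑ t : G₀, (if t = 0 then a else b) = a + Fintype.card G₀ˣ • b := by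
  have ite_eq (t : G₀) (ht : t ∈ ({0}ᶜ : Finset G₀)) : (if t = 0 then a else b) = b :=
    if_neg (by simpa using ht)
  rw [Fintype.sum_eq_add_sum_compl 0, if_pos rfl, Finset.sum_congr rfl ite_eq, Finset.sum_const,
    Finset.card_compl, Finset.card_singleton, Fintype.card_units]

section GeneralLinearGroup

open OnePoint

variable {F : Type*} [Field F]

instance isPretransitive_GL_two_onePoint :
    MulAction.IsPretransitive (GL (Fin 2) F) (OnePoint F) := by
  refine (MulAction.isPretransitive_iff_base ∞).2 fun p => ?_
  induction p with
  | infty => exact ⟨1, one_smul _ _⟩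
  | coe t =>
    refine ⟨Matrix.GeneralLinearGroup.mkOfDetNeZero !![t, -1; 1, 0] (by simp), ?_⟩
    simp [smul_infty_eq_ite, Matrix.GeneralLinearGroup.mkOfDetNeZero]

lemma coe_inv_mul_diagGL_mul (x y : Fˣ) (s : GL (Fin 2) F) :
    ((s⁻¹ * diagGL x y * s : GL (Fin 2) F) : Matrix (Fin 2) (Fin 2) F) =
      (s.val.det)⁻¹ •
        !![x * (s 0 0 * s 1 1) - y * (s 0 1 * s 1 0), (x - y) * (s 0 1 * s 1 1);
          (y - x) * (s 0 0 * s 1 0), y * (s 0 0 * s 1 1) - x * (s 0 1 * s 1 0)] := by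
  have coe_diagGL : (diagGL x y : Matrix (Fin 2) (Fin 2) F) = !![(x : F), 0; 0, (y : F)] :=
    Matrix.diagonal_vec2 _ _
  rw [Units.val_mul, Units.val_mul, Matrix.coe_units_inv, coe_diagGL, Matrix.inv_def,
    Matrix.adjugate_fin_two, Ring.inverse_eq_inv', Matrix.smul_mul, Matrix.smul_mul]
  congr 1
  ext i j
  fin_cases i <;> fin_cases j <;> simp [Matrix.mul_apply] <;> ring

lemma inv_mul_diagGL_mul_apply_one_zero_eq_zero_iff (x y : Fˣ) (s : GL (Fin 2) F) :
    (s⁻¹ * diagGL x y * s) 1 0 = 0 ↔ x = y ∨ s 0 0 = 0 ∨ s 1 0 = 0 := by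
  rw [coe_inv_mul_diagGL_mul]
  simp [s.det_ne_zero, sub_eq_zero, Units.val_inj, eq_comm (a := y)]

lemma extChar_coe (l : Fˣ →* ℂˣ) (x : Fˣ) : extChar l (x : F) = l x := by
  simp [extChar]

lemma borelCharVal_of_apply_eq (l₁ l₂ : Fˣ →* ℂˣ) {x y : Fˣ} {b : GL (Fin 2) F}
    (h₀ : b 0 0 = x) (h₁ : b 1 1 = y) : borelCharVal l₁ l₂ b = l₁ x * l₂ y := by
  rw [borelCharVal, h₀, h₁, extChar_coe, extChar_coe]

lemma borelCharVal_inv_mul_diagGL_mul_of_apply_one_zero_eq_zero (l₁ l₂ : Fˣ →* ℂˣ) (x y : Fˣ)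
    {s : GL (Fin 2) F} (hs : s 1 0 = 0) :
    borelCharVal l₁ l₂ (s⁻¹ * diagGL x y * s) = l₁ x * l₂ y := by
  have det_eq : s.val.det = s 0 0 * s 1 1 := by simp [Matrix.det_fin_two, hs]
  apply borelCharVal_of_apply_eq <;> rw [coe_inv_mul_diagGL_mul]
  · simp [hs, ← det_eq, mul_left_comm _ (x : F), s.det_ne_zero]
  · simp [hs, ← det_eq, mul_left_comm _ (y : F), s.det_ne_zero]

lemma borelCharVal_inv_mul_diagGL_mul_of_apply_zero_zero_eq_zero (l₁ l₂ : Fˣ →* ℂˣ) (x y : Fˣ)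
    {s : GL (Fin 2) F} (hs : s 0 0 = 0) :
    borelCharVal l₁ l₂ (s⁻¹ * diagGL x y * s) = l₁ y * l₂ x := by
  have det_eq : s.val.det = -(s 0 1 * s 1 0) := by simp [Matrix.det_fin_two, hs]
  apply borelCharVal_of_apply_eq <;> rw [coe_inv_mul_diagGL_mul]
  · simp [hs, ← mul_neg, ← det_eq, mul_left_comm _ (y : F), s.det_ne_zero]
  · simp [hs, ← mul_neg, ← det_eq, mul_left_comm _ (x : F), s.det_ne_zero]

lemma borelCharVal_inv_mul_diagGL_self_mul (l₁ l₂ : Fˣ →* ℂˣ) (x : Fˣ) (s : GL (Fin 2) F) :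
    borelCharVal l₁ l₂ (s⁻¹ * diagGL x x * s) = l₁ x * l₂ x := by
  apply borelCharVal_of_apply_eq <;> rw [coe_inv_mul_diagGL_mul]
  · simp [← mul_sub, ← Matrix.det_fin_two, mul_left_comm _ (x : F), s.det_ne_zero]
  · simp [← mul_sub, ← Matrix.det_fin_two, mul_left_comm _ (x : F), s.det_ne_zero]

/-- The contribution of `p ∈ ℙ¹(F)` to the character of `Ind_B^G (l₁ ⊗ l₂)` at `diag(x, y)`, viewed
as a sum over the fixed points of `diag(x, y)` on `G / B = ℙ¹(F)`. The line spanned by `(a, c)` is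
encoded as `a / c`, so `∞` and `0` are the two coordinate lines, which are always fixed; any other
point is fixed only when `x = y`. -/
noncomputable def fixedPointWeight (l₁ l₂ : Fˣ →* ℂˣ) (x y : Fˣ) (p : OnePoint F) : ℂ :=
  p.elim (l₁ x * l₂ y) fun t => if t = 0 then l₁ y * l₂ x else if x = y then l₁ x * l₂ x else 0

lemma fixedPointWeight_smul_infty (l₁ l₂ : Fˣ →* ℂˣ) (x y : Fˣ) (s : GL (Fin 2) F) :
    fixedPointWeight l₁ l₂ x y (s • ∞) =
      if (s⁻¹ * diagGL x y * s) 1 0 = 0 then borelCharVal l₁ l₂ (s⁻¹ * diagGL x y * s) else 0 := by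
  simp only [inv_mul_diagGL_mul_apply_one_zero_eq_zero_iff, smul_infty_eq_ite]
  by_cases h10 : s 1 0 = 0
  · simp [fixedPointWeight, h10, borelCharVal_inv_mul_diagGL_mul_of_apply_one_zero_eq_zero]
  by_cases h00 : s 0 0 = 0
  · simp [fixedPointWeight, h10, h00, borelCharVal_inv_mul_diagGL_mul_of_apply_zero_zero_eq_zero]
  by_cases hxy : x = y
  · simp [fixedPointWeight, h10, h00, hxy, borelCharVal_inv_mul_diagGL_self_mul]
  · simp [fixedPointWeight, h10, h00, hxy]

variable [Fintype F]

lemma inducedChar_eq_sum_onePoint (l₁ l₂ : Fˣ →* ℂˣ) (g : GL (Fin 2) F) (w : OnePoint F → ℂ)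
    (hw : ∀ s : GL (Fin 2) F, w (s • ∞) =
      if (s⁻¹ * g * s) 1 0 = 0 then borelCharVal l₁ l₂ (s⁻¹ * g * s) else 0) :
    inducedChar l₁ l₂ g = ∑ p, w p := by
  have card_borel : Fintype.card {b : GL (Fin 2) F // b 1 0 = 0} =
      Fintype.card (MulAction.stabilizer (GL (Fin 2) F) (∞ : OnePoint F)) :=
    Fintype.card_congr (Equiv.subtypeEquivRight fun _ => smul_infty_eq_self_iff.symm)
  simp only [inducedChar, card_borel, ← hw]
  rw [sum_comp_smul_eq_card_stabilizer_nsmul_sum, nsmul_eq_mul, one_div,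
    inv_mul_cancel_left₀ (Nat.cast_ne_zero.2 Fintype.card_ne_zero)]

lemma inducedChar_diagGL (l₁ l₂ : Fˣ →* ℂˣ) (x y : Fˣ) :
    inducedChar l₁ l₂ (diagGL x y) =
      l₁ x * l₂ y + l₂ x * l₁ y + if x = y then (Fintype.card Fˣ : ℂ) * (l₁ x * l₂ x) else 0 := by
  rw [inducedChar_eq_sum_onePoint l₁ l₂ _ _ (fixedPointWeight_smul_infty l₁ l₂ x y)]
  calc ∑ p, fixedPointWeight l₁ l₂ x y p
      = fixedPointWeight l₁ l₂ x y ∞ + ∑ t : F, fixedPointWeight l₁ l₂ x y t :=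
        Fintype.sum_option _
    _ = l₁ x * l₂ y + (l₁ y * l₂ x +
          Fintype.card Fˣ • if x = y then (l₁ x * l₂ x : ℂ) else 0) := by
        simp only [fixedPointWeight, elim_infty, elim_some, sum_ite_eq_zero]
    _ = l₁ x * l₂ y + l₂ x * l₁ y +
          if x = y then (Fintype.card Fˣ : ℂ) * (l₁ x * l₂ x) else 0 := by
        rw [nsmul_eq_mul, mul_ite, mul_zero, mul_comm (l₁ y : ℂ), add_assoc]

lemma torusMultiplicity_eq (l₁ l₂ μ₁ μ₂ : Fˣ →* ℂˣ) :
    torusMultiplicity l₁ l₂ μ₁ μ₂ =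
      (if l₁ = μ₁ ∧ l₂ = μ₂ then 1 else 0) + (if l₂ = μ₁ ∧ l₁ = μ₂ then 1 else 0) +
        if l₁ * l₂ = μ₁ * μ₂ then 1 else 0 := by
  have sum_diag : ∑ x : Fˣ, ∑ y : Fˣ,
      (if x = y then (Fintype.card Fˣ : ℂ) * (l₁ x * l₂ x) else 0) *
        (starRingEnd ℂ) ((μ₁ x : ℂ) * μ₂ y) =
      if l₁ * l₂ = μ₁ * μ₂ then (Fintype.card Fˣ : ℂ) ^ 2 else 0 := by
    have h := sum_char_mul_conj_char (l₁ * l₂) (μ₁ * μ₂)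
    simp only [MonoidHom.mul_apply, Units.val_mul] at h
    simp only [ite_mul, zero_mul, Finset.sum_ite_eq, Finset.mem_univ, if_true, mul_assoc,
      ← Finset.mul_sum] at h ⊢
    rw [h, mul_ite, mul_zero, sq]
  have card_ne_zero : (Fintype.card Fˣ : ℂ) ≠ 0 := Nat.cast_ne_zero.2 Fintype.card_ne_zero
  simp only [torusMultiplicity, inducedChar_diagGL, add_mul, Finset.sum_add_distrib,
    sum_sum_char_mul_conj_char, sum_diag]
  simp only [← sq, mul_add, mul_ite, mul_zero, one_div_mul_cancel (pow_ne_zero 2 card_ne_zero)]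

end GeneralLinearGroup

theorem stmt_16 (F : Type*) [Field F] [Fintype F]
    (l₁ l₂ μ₁ μ₂ : Fˣ →* ℂˣ) (hl : l₁ ≠ l₂) :
    (μ₁ * μ₂ ≠ l₁ * l₂ → torusMultiplicity l₁ l₂ μ₁ μ₂ = 0) ∧
    ((μ₁, μ₂) = (l₁, l₂) ∨ (μ₁, μ₂) = (l₂, l₁) → torusMultiplicity l₁ l₂ μ₁ μ₂ = 2) ∧
    (μ₁ * μ₂ = l₁ * l₂ → ¬((μ₁, μ₂) = (l₁, l₂) ∨ (μ₁, μ₂) = (l₂, l₁)) →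
      torusMultiplicity l₁ l₂ μ₁ μ₂ = 1) := by
  have hcomm : l₂ * l₁ = l₁ * l₂ := MonoidHom.ext fun _ => mul_comm _ _
  simp only [torusMultiplicity_eq, Prod.mk.injEq]
  refine ⟨fun hne => ?_, ?_, fun heq hpair => ?_⟩
  · have not_id : ¬(l₁ = μ₁ ∧ l₂ = μ₂) := by rintro ⟨rfl, rfl⟩; exact hne rfl
    have not_swap : ¬(l₂ = μ₁ ∧ l₁ = μ₂) := by rintro ⟨rfl, rfl⟩; exact hne hcomm
    simp [not_id, not_swap, hne.symm]
  · rintro (⟨rfl, rfl⟩ | ⟨rfl, rfl⟩)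
    · norm_num [hl, hl.symm]
    · norm_num [hl, hl.symm, hcomm]
  · obtain ⟨not_id, not_swap⟩ := not_or.1 hpair
    simp [heq, eq_comm (a := l₁), eq_comm (a := l₂), not_id, not_swap]
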